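/- Let k ≥ 1 and n ≥ 1 be integers, let (m₁,…,mₙ) be a tuple of nonnegative integers, and let N be a complex number. Then (1/((2πi)^{k}·k!)) ∮_{|w₁|=1}⋯∮_{|w_k|=1} ( e^{N(w₁+⋯+w_k)} / ∏_{i=1}^{k} w_i^{2k} ) · Δ²(w) · ( Σ_{l=1}^{k} 1/w_l − N/2 )^{m₁} · ∏_{j=2}^{n} ( Σ_{l=1}^{k} 1/w_l^{j} )^{m_j} dw₁⋯dw_k = N^{k²+Σ_{s=1}^{n} s·m_s} · Σ (−1/2)^{m₁₀} · C(m₁; m₁₀,m₁₁,…,m₁ₖ) · ( ∏_{s=2}^{n} C(m_s; m_{s1},…,m_{sk}) ) · ( ∏_{i=1}^{k} 1/(2k + Σ_{s=1}^{n} s·m_{si} − i)! ) · ∏_{1≤i<j≤k} ( Σ_{s=1}^{n} s·m_{sj} − Σ_{s=1}^{n} s·m_{si} − j + i ), where the sum is over all nonnegative integers m₁₀, m₁₁,…,m₁ₖ with m₁₀+m₁₁+⋯+m₁ₖ = m₁ and, for each s = 2,…,n, all nonnegative integers m_{s1},…,m_{sk} with m_{s1}+⋯+m_{sk} = m_s.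 -/

import Mathlib

open Finset

noncomputable section

/-- The iterated contour integral `∮_{|w₁|=1} ⋯ ∮_{|w_n|=1} f(w₁,…,w_n) dw_n ⋯ dw₁`,
each circle positively oriented. -/
def multiCircle : (n : ℕ) → ((Fin n → ℂ) → ℂ) → ℂ
  | 0, f => f ![]
  | n + 1, f => circleIntegral (fun w => multiCircle n (fun v => f (Fin.cons w v))) 0 1


theorem mc_congr : ∀ (k : ℕ) (f g : (Fin k → ℂ) → ℂ),
    (∀ w : Fin k → ℂ, (∀ i, w i ≠ 0) → f w = g w) → multiCircle k f = multiCircle k g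
  | 0, f, g, h => by
    simp only [multiCircle]
    exact h _ (fun i => i.elim0)
  | k + 1, f, g, h => by
    simp only [multiCircle]
    apply circleIntegral.integral_congr zero_le_one
    intro w hw
    apply mc_congr k
    intro v hv
    apply h
    intro i
    refine Fin.cases ?_ (fun j => ?_) i
    · simp only [Fin.cons_zero]
      rintro rfl
      simp at hw
    · simpa using hv j

theorem mc_sum {ι : Type*} (s : Finset ι) : ∀ (k : ℕ) (c : ι → ℂ) (f : ι → Fin k → ℂ → ℂ),
    (∀ t i, CircleIntegrable (f t i) 0 1) →
    multiCircle k (fun w => ∑ t ∈ s, c t * ∏ i, f t i (w i)) =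
      ∑ t ∈ s, c t * ∏ i, circleIntegral (f t i) 0 1
  | 0, c, f, h => by simp [multiCircle]
  | k + 1, c, f, h => by
    simp only [multiCircle]
    have : ∀ w : ℂ, multiCircle k (fun v => ∑ t ∈ s, c t * ∏ i, f t i
        ((Fin.cons w v : Fin (k+1) → ℂ) i)) =
        ∑ t ∈ s, (c t * ∏ i : Fin k, circleIntegral (f t i.succ) 0 1) * f t 0 w := by
      intro w
      rw [show (fun v : Fin k → ℂ => ∑ t ∈ s, c t * ∏ i, f t i
        ((Fin.cons w v : Fin (k+1) → ℂ) i)) = fun v => ∑ t ∈ s, (c t * f t 0 w) *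
          ∏ i : Fin k, f t i.succ (v i) by
        funext v
        refine Finset.sum_congr rfl fun t _ => ?_
        rw [Fin.prod_univ_succ]; simp [mul_assoc]]
      rw [mc_sum s k (fun t => c t * f t 0 w) (fun t i => f t i.succ) (fun t i => h t _)]
      refine Finset.sum_congr rfl fun t _ => by ring
    simp only [this]
    rw [circleIntegral.integral_fun_sum]
    · refine Finset.sum_congr rfl fun t _ => ?_
      rw [circleIntegral.integral_const_mul, Fin.prod_univ_succ]; ring
    · intro t _
      exact (h t 0).const_smul (a := (c t * ∏ i : Fin k, circleIntegral (f t i.succ) 0 1))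

theorem ci_exp (N : ℂ) (e : ℕ) :
    circleIntegral (fun w => w ^ (-((e:ℤ) + 1)) * Complex.exp (N * w)) 0 1 =
      2 * (Real.pi : ℂ) * Complex.I * (N ^ e / (e.factorial : ℂ)) := by
  have hd : Differentiable ℂ (fun w : ℂ => Complex.exp (N * w)) := by fun_prop
  have := hd.diffContOnCl (s := Metric.ball 0 1) |>.circleIntegral_one_div_sub_center_pow_smul
    (n := e) one_pos
  rw [iteratedDeriv_cexp_const_mul] at this
  simp at this
  rw [show (fun w : ℂ => w ^ (-((e:ℤ) + 1)) * Complex.exp (N * w)) =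
    fun w => (w ^ (e+1))⁻¹ * Complex.exp (N * w) by
      funext w; rw [zpow_neg]; norm_cast]
  rw [this]; ring

theorem ci_int (N : ℂ) (e : ℤ) :
    CircleIntegrable (fun w => w ^ e * Complex.exp (N * w)) 0 1 := by
  apply ContinuousOn.circleIntegrable zero_le_one
  apply ContinuousOn.mul
  · intro w hw
    apply ContinuousAt.continuousWithinAt
    apply continuousAt_zpow₀
    left
    rintro rfl
    simp at hw
  · fun_prop

theorem det_fact (k : ℕ) (x : Fin k → ℕ) (hx : ∀ i, k ≤ x i + 1) :
    (Matrix.of fun i j : Fin k => (1 : ℂ) / ((x i - (j : ℕ)).factorial : ℂ)).det =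
      (∏ i, (1 : ℂ) / ((x i).factorial : ℂ)) *
        ∏ p ∈ Finset.univ.filter (fun p : Fin k × Fin k => p.1 < p.2),
          ((x p.2 : ℂ) - x p.1) := by
  have h1 := Matrix.det_eval_matrixOfPolynomials_eq_det_vandermonde (fun i => (x i : ℂ))
    (fun j : Fin k => descPochhammer ℂ j) (fun j => descPochhammer_natDegree _ _)
    (fun j => monic_descPochhammer _ _)
  have h2 : (∏ p ∈ Finset.univ.filter (fun p : Fin k × Fin k => p.1 < p.2),
          ((x p.2 : ℂ) - x p.1)) = (Matrix.vandermonde (fun i => (x i : ℂ))).det := by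
    rw [Matrix.det_vandermonde, Finset.prod_sigma']
    refine Finset.prod_bij' (fun p _ => ⟨p.1, p.2⟩) (fun p _ => (p.1, p.2)) ?_ ?_ ?_ ?_ ?_ <;> simp
  rw [h2, h1, ← Matrix.det_mul_column]
  congr 1
  ext i j
  simp only [Matrix.of_apply, descPochhammer_eval_eq_descFactorial]
  have hj : (j : ℕ) ≤ x i := by have := hx i; have := j.2; omega
  have := Nat.factorial_mul_descFactorial hj
  rw [← this]
  have a := Nat.factorial_ne_zero (x i - j)
  have b : (x i).descFactorial j ≠ 0 := by rw [Ne, Nat.descFactorial_eq_zero_iff_lt]; omega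
  push_cast
  field_simp

theorem delta_sq (k : ℕ) (w : Fin k → ℂ) :
    (∏ p ∈ Finset.univ.filter (fun p : Fin k × Fin k => p.1 < p.2), (w p.1 - w p.2)) ^ 2 =
      (Matrix.vandermonde w).det ^ 2 := by
  have h2 : (Matrix.vandermonde w).det ^ 2 =
      (∏ p ∈ Finset.univ.filter (fun p : Fin k × Fin k => p.1 < p.2), (w p.2 - w p.1)) ^ 2 := by
    rw [Matrix.det_vandermonde, Finset.prod_sigma']
    congr 1
    refine Finset.prod_bij' (fun p _ => (p.1, p.2)) (fun p _ => ⟨p.1, p.2⟩) ?_ ?_ ?_ ?_ ?_ <;> simp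
  rw [h2, ← Finset.prod_pow, ← Finset.prod_pow]
  refine Finset.prod_congr rfl fun p _ => by ring

theorem pt_expand (k : ℕ) (N : ℂ) {T : Type*} (s : Finset T) (c : T → ℂ) (a : T → Fin k → ℕ)
    (P : (Fin k → ℂ) → ℂ)
    (hsym : ∀ (w : Fin k → ℂ) (σ : Equiv.Perm (Fin k)), P (w ∘ σ) = P w)
    (hP : ∀ w : Fin k → ℂ, (∀ i, w i ≠ 0) → P w = ∑ t ∈ s, c t * ∏ i, w i ^ (-(a t i : ℤ)))
    (w : Fin k → ℂ) (hw : ∀ i, w i ≠ 0) :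
    Complex.exp (N * ∑ i, w i) / (∏ i, w i ^ (2 * k)) * (Matrix.vandermonde w).det ^ 2 * P w =
    ∑ q ∈ (Finset.univ : Finset (Equiv.Perm (Fin k))) ×ˢ
        ((Finset.univ : Finset (Equiv.Perm (Fin k))) ×ˢ s),
      (((Equiv.Perm.sign q.2.1 : ℤ) : ℂ) * c q.2.2) * ∏ i,
        ((w i) ^ (((q.1 i : ℕ) : ℤ) + ((q.2.1 (q.1 i) : ℕ) : ℤ) - 2 * k - a q.2.2 (q.1 i)) *
          Complex.exp (N * w i)) := by
  have hV : ∀ v : Fin k → ℂ, (Matrix.vandermonde v).det =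
      ∑ σ : Equiv.Perm (Fin k), ((Equiv.Perm.sign σ : ℤ) : ℂ) * ∏ i, v i ^ ((σ i : ℕ)) := by
    intro v
    rw [← Matrix.det_transpose, Matrix.det_apply']
    simp [Matrix.vandermonde]
  rw [Finset.sum_product, sq]
  nth_rewrite 1 [hV w]
  rw [Finset.sum_mul, Finset.mul_sum, Finset.sum_mul]
  refine Finset.sum_congr rfl fun σ _ => ?_
  obtain ⟨v, rfl⟩ : ∃ v : Fin k → ℂ, w = v ∘ σ := ⟨w ∘ σ.symm, by ext; simp⟩
  have hv : ∀ i, v i ≠ 0 := fun i => by simpa using hw (σ.symm i)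
  rw [hsym, hP v hv]
  have h1 : (Matrix.vandermonde (v ∘ σ)).det =
      ((Equiv.Perm.sign σ : ℤ) : ℂ) * (Matrix.vandermonde v).det := by
    rw [← Matrix.det_permute]; rfl
  have h2 : ((Equiv.Perm.sign σ : ℤ) : ℂ) * ((Equiv.Perm.sign σ : ℤ) : ℂ) = 1 := by
    norm_cast
    simp
  have e1 : ∑ i, (v ∘ σ) i = ∑ i, v i := Equiv.sum_comp σ v
  have e2 : ∏ i, (v ∘ σ) i ^ (2 * k) = ∏ i, v i ^ (2 * k) :=
    Equiv.prod_comp σ (fun i => v i ^ (2 * k))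
  have e3 : ∏ i, (v ∘ σ) i ^ ((σ i : ℕ)) = ∏ i, v i ^ ((i : ℕ)) :=
    Equiv.prod_comp σ (fun i => v i ^ ((i : ℕ)))
  rw [h1, e1, e2, e3, hV v]
  rw [Finset.sum_product]
  trans Complex.exp (N * ∑ i, v i) / (∏ i, v i ^ (2 * k)) * (∏ i, v i ^ ((i : ℕ))) *
    ((∑ τ : Equiv.Perm (Fin k), ((Equiv.Perm.sign τ : ℤ) : ℂ) * ∏ i, v i ^ ((τ i : ℕ))) *
      ∑ t ∈ s, c t * ∏ i, v i ^ (-(a t i : ℤ)))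
  · linear_combination (Complex.exp (N * ∑ i, v i) / (∏ i, v i ^ (2 * k)) *
      (∏ i, v i ^ ((i : ℕ))) *
      ((∑ τ : Equiv.Perm (Fin k), ((Equiv.Perm.sign τ : ℤ) : ℂ) * ∏ i, v i ^ ((τ i : ℕ))) *
      ∑ t ∈ s, c t * ∏ i, v i ^ (-(a t i : ℤ)))) * h2
  rw [Finset.sum_mul_sum, Finset.mul_sum]
  refine Finset.sum_congr rfl fun τ _ => ?_
  rw [Finset.mul_sum]
  refine Finset.sum_congr rfl fun t _ => ?_
  have e4 := Equiv.prod_comp σ (fun i => (v i) ^ (((i : ℕ) : ℤ) + ((τ i : ℕ) : ℤ)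
    - 2 * k - a t i) * Complex.exp (N * v i))
  simp only [Function.comp] at e4 ⊢
  rw [e4, Finset.mul_sum, Complex.exp_sum]
  have e5 : ∏ i, (v i) ^ (((i : ℕ) : ℤ) + ((τ i : ℕ) : ℤ) - 2 * k - a t i) * Complex.exp (N * v i)
      = (∏ i, v i ^ (i : ℕ)) * (∏ i, v i ^ (τ i : ℕ)) * (∏ i, v i ^ (2 * k))⁻¹ *
        (∏ i, v i ^ (-(a t i : ℤ))) * ∏ i, Complex.exp (N * v i) := by
    rw [← Finset.prod_inv_distrib]
    simp only [← Finset.prod_mul_distrib]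
    refine Finset.prod_congr rfl fun i _ => ?_
    rw [zpow_sub₀ (hv i), zpow_sub₀ (hv i), zpow_add₀ (hv i), zpow_neg]
    norm_cast
  rw [e5]
  ring

theorem mc_sym (k : ℕ) (N : ℂ) {T : Type*} (s : Finset T) (c : T → ℂ) (a : T → Fin k → ℕ)
    (P : (Fin k → ℂ) → ℂ)
    (hsym : ∀ (w : Fin k → ℂ) (σ : Equiv.Perm (Fin k)), P (w ∘ σ) = P w)
    (hP : ∀ w : Fin k → ℂ, (∀ i, w i ≠ 0) → P w = ∑ t ∈ s, c t * ∏ i, w i ^ (-(a t i : ℤ))) :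
    multiCircle k (fun w => Complex.exp (N * ∑ i, w i) / (∏ i, w i ^ (2 * k)) *
      (∏ p ∈ Finset.univ.filter (fun p : Fin k × Fin k => p.1 < p.2), (w p.1 - w p.2)) ^ 2 *
      P w) =
    ((2 * (Real.pi : ℂ) * Complex.I) ^ k * (k.factorial : ℂ)) *
      ∑ t ∈ s, c t * (N ^ (k ^ 2 + ∑ i, a t i) *
        ((∏ i : Fin k, (1 : ℂ) / ((2 * k + a t i - ((i : ℕ) + 1)).factorial : ℂ)) *
        ∏ p ∈ Finset.univ.filter (fun p : Fin k × Fin k => p.1 < p.2),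
          (((2 * k + a t p.2 - ((p.2 : ℕ) + 1) : ℕ) : ℂ) -
            ((2 * k + a t p.1 - ((p.1 : ℕ) + 1) : ℕ) : ℂ)))) := by
  simp only [delta_sq]
  rw [mc_congr k _ _ (pt_expand k N s c a P hsym hP)]
  rw [mc_sum _ k (fun q : Equiv.Perm (Fin k) × (Equiv.Perm (Fin k) × T) =>
    (((Equiv.Perm.sign q.2.1 : ℤ) : ℂ) * c q.2.2))
    (fun q i z => z ^ (((q.1 i : ℕ) : ℤ) + ((q.2.1 (q.1 i) : ℕ) : ℤ) - 2 * k - a q.2.2 (q.1 i)) *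
          Complex.exp (N * z)) (fun q i => ci_int N _)]
  rw [Finset.sum_product]
  have key : ∀ σ τ : Equiv.Perm (Fin k), ∀ t : T, ∏ i, circleIntegral (fun z : ℂ =>
      z ^ (((σ i : ℕ) : ℤ) + ((τ (σ i) : ℕ) : ℤ) - 2 * k - a t (σ i)) *
          Complex.exp (N * z)) 0 1 = (2 * (Real.pi : ℂ) * Complex.I) ^ k *
          (N ^ (k ^ 2 + ∑ i, a t i) *
           ∏ i, (1 : ℂ) / (((2 * k + a t i - ((i : ℕ) + 1)) - (τ i : ℕ)).factorial : ℂ)) := by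
    intro σ τ t
    rw [Equiv.prod_comp σ (fun i => circleIntegral (fun z : ℂ =>
      z ^ (((i : ℕ) : ℤ) + ((τ i : ℕ) : ℤ) - 2 * k - a t i) * Complex.exp (N * z)) 0 1)]
    have : ∀ i : Fin k, circleIntegral (fun z : ℂ =>
      z ^ (((i : ℕ) : ℤ) + ((τ i : ℕ) : ℤ) - 2 * k - a t i) * Complex.exp (N * z)) 0 1 =
      2 * (Real.pi : ℂ) * Complex.I * (N ^ ((2 * k + a t i - ((i : ℕ) + 1)) - (τ i : ℕ)) *
        (1 / (((2 * k + a t i - ((i : ℕ) + 1)) - (τ i : ℕ)).factorial : ℂ))) := by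
      intro i
      rw [mul_one_div, ← ci_exp]
      have := i.2
      have := (τ i).2
      rw [show ((i : ℕ) : ℤ) + ((τ i : ℕ) : ℤ) - 2 * k - a t i =
        -((((2 * k + a t i - ((i : ℕ) + 1)) - (τ i : ℕ) : ℕ) : ℤ) + 1) by omega]
    rw [Finset.prod_congr rfl (fun i _ => this i)]
    generalize 2 * (Real.pi : ℂ) * Complex.I = K
    rw [Finset.prod_mul_distrib,
      Finset.prod_mul_distrib, Finset.prod_pow_eq_pow_sum]
    simp only [Finset.prod_const, Finset.card_univ, Fintype.card_fin]
    congr 3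
    have h : ∑ i : Fin k, ((2 * k + a t i - ((i : ℕ) + 1)) - (τ i : ℕ)) + ∑ i : Fin k, (i : ℕ)
        + ∑ i : Fin k, (τ i : ℕ) + k = 2 * k * k + ∑ i, a t i := by
      have : ∀ i : Fin k, ((2 * k + a t i - ((i : ℕ) + 1)) - (τ i : ℕ)) + (i : ℕ) + (τ i : ℕ) + 1
        = 2 * k + a t i := by
        intro i
        have := i.2
        have := (τ i).2
        omega
      have h2 := Finset.sum_congr rfl (fun i (_ : i ∈ (Finset.univ : Finset (Fin k))) => this i)
      simp only [Finset.sum_add_distrib] at h2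
      simp only [Finset.sum_const, Finset.card_univ, Fintype.card_fin, smul_eq_mul] at h2
      rw [mul_one] at h2
      rw [h2]; ring
    rw [Equiv.sum_comp τ (fun i : Fin k => (i : ℕ))] at h
    have h3 : (∑ i : Fin k, (i : ℕ)) * 2 + k = k ^ 2 := by
      rw [Fin.sum_univ_eq_sum_range (fun i => i), Finset.sum_range_id_mul_two]
      cases k with
      | zero => rfl
      | succ n => simp; ring
    nlinarith
  simp only [key]
  rw [Finset.sum_const, Finset.card_univ, Fintype.card_perm, Fintype.card_fin, nsmul_eq_mul,
    Finset.sum_product_right]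
  generalize 2 * (Real.pi : ℂ) * Complex.I = K
  rw [mul_comm (K ^ k) (_ : ℂ), mul_assoc, Finset.mul_sum _ _ (K ^ k)]
  congr 1
  refine Finset.sum_congr rfl fun t _ => ?_
  rw [← det_fact k (fun i => 2 * k + a t i - ((i : ℕ) + 1)) (fun i => by have := i.2; omega),
    ← Matrix.det_transpose, Matrix.det_apply']
  simp only [Matrix.transpose_apply, Matrix.of_apply, Finset.mul_sum]
  refine Finset.sum_congr rfl fun τ _ => by ring

theorem P_expand (k nn m1 : ℕ) (mr : Fin nn → ℕ) (N : ℂ) (w : Fin k → ℂ) (hw : ∀ i, w i ≠ 0) :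
    ((∑ l, 1 / w l) - N / 2) ^ m1 * ∏ j : Fin nn, (∑ l, 1 / w l ^ ((j : ℕ) + 2)) ^ (mr j) =
    ∑ t ∈ ((Fintype.piFinset fun _ : Fin (k + 1) => Finset.range (m1 + 1)).filter
            (fun g => ∑ i, g i = m1)) ×ˢ
      ((Fintype.piFinset fun j : Fin nn => Fintype.piFinset fun _ : Fin k =>
                Finset.range (mr j + 1)).filter (fun Mm => ∀ j, ∑ i, Mm j i = mr j)),
      ((-N / 2) ^ (t.1 0) * (Nat.multinomial Finset.univ t.1 : ℂ) *
              (∏ j, (Nat.multinomial Finset.univ (t.2 j) : ℂ))) *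
        ∏ i, w i ^ (-((t.1 i.succ + ∑ j : Fin nn, ((j : ℕ) + 2) * t.2 j i : ℕ) : ℤ)) := by
  have s1 : ((Fintype.piFinset fun _ : Fin (k + 1) => Finset.range (m1 + 1)).filter
      (fun g => ∑ i, g i = m1)) = Finset.piAntidiag Finset.univ m1 := by
    ext g
    simp only [Finset.mem_filter, Fintype.mem_piFinset, Finset.mem_range, Finset.mem_piAntidiag,
      Finset.mem_univ, implies_true, and_true, and_iff_right_iff_imp]
    intro h i
    have := Finset.single_le_sum (f := g) (fun _ _ => Nat.zero_le _) (Finset.mem_univ i)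
    omega
  have s2 : ((Fintype.piFinset fun j : Fin nn => Fintype.piFinset fun _ : Fin k =>
      Finset.range (mr j + 1)).filter (fun Mm => ∀ j, ∑ i, Mm j i = mr j)) =
      Fintype.piFinset fun j : Fin nn => Finset.piAntidiag Finset.univ (mr j) := by
    ext M
    simp only [Finset.mem_filter, Fintype.mem_piFinset, Finset.mem_range, Finset.mem_piAntidiag,
      Finset.mem_univ, implies_true, and_true, and_iff_right_iff_imp]
    intro h j i
    have := Finset.single_le_sum (f := M j) (fun _ _ => Nat.zero_le _) (Finset.mem_univ i)
    have := h j
    omega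
  have e1 : (∑ l, 1 / w l) - N / 2 =
      ∑ i : Fin (k + 1), (Fin.cons (-N / 2) (fun l => 1 / w l) : Fin (k + 1) → ℂ) i := by
    rw [Fin.sum_univ_succ]
    simp only [Fin.cons_zero, Fin.cons_succ]
    ring
  rw [s1, s2, e1, Finset.sum_pow_eq_sum_piAntidiag]
  simp only [Finset.sum_pow_eq_sum_piAntidiag]
  rw [Finset.prod_univ_sum, Finset.sum_mul_sum, Finset.sum_product]
  refine Finset.sum_congr rfl fun g _ => Finset.sum_congr rfl fun M _ => ?_
  rw [Fin.prod_univ_succ, Finset.prod_mul_distrib, Finset.prod_comm]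
  simp only [Fin.cons_zero, Fin.cons_succ]
  have : ∀ i, w i ^ (-((g i.succ + ∑ j : Fin nn, ((j : ℕ) + 2) * M j i : ℕ) : ℤ)) =
      (1 / w i) ^ g i.succ * ∏ j : Fin nn, (1 / w i ^ ((j : ℕ) + 2)) ^ M j i := by
    intro i
    rw [zpow_neg, zpow_natCast, pow_add, ← Finset.prod_pow_eq_pow_sum, mul_inv,
      ← Finset.prod_inv_distrib]
    simp [pow_mul]
  simp only [this, Finset.prod_mul_distrib]
  ring
/-- **Proposition (the `k`-fold contour integral with `(Σ1/w_l − N/2)^{m₁}`).**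
Here `n = nn + 1 ≥ 1` and the tuple `(m₁,…,mₙ)` is encoded by `m1 : ℕ` (for `m₁`) and
`mr : Fin nn → ℕ` (with `m_(j+2) = mr j`); `Δ²(w) = (∏_{i<j}(wᵢ−w_j))²`.  On the right,
`g : Fin (k+1) → ℕ` encodes `(m₁₀,m₁₁,…,m₁ₖ)` with `Σ g = m₁` and, for each `s = j+2`,
`Mm j : Fin k → ℕ` encodes `(m_{s1},…,m_{sk})` with sum `m_s`; the quantity
`Σ_{s=1}^n s·m_{si}` is `g i.succ + Σ_j (j+2)·Mm j i`, and `−j+i` (1-based) equals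
`−(p.2)+p.1` (0-based). -/
theorem contour_integral_prop_half (k nn : ℕ) (hk : 1 ≤ k) (m1 : ℕ) (mr : Fin nn → ℕ)
    (N : ℂ) :
    ((2 * (Real.pi : ℂ) * Complex.I) ^ k * (k.factorial : ℂ))⁻¹ *
        multiCircle k (fun w =>
          Complex.exp (N * ∑ i, w i) / (∏ i, w i ^ (2 * k)) *
            (∏ p ∈ Finset.univ.filter (fun p : Fin k × Fin k => p.1 < p.2),
              (w p.1 - w p.2)) ^ 2 *
            ((∑ l, 1 / w l) - N / 2) ^ m1 *
            ∏ j : Fin nn, (∑ l, 1 / w l ^ ((j : ℕ) + 2)) ^ (mr j)) =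
      N ^ (k ^ 2 + m1 + ∑ j : Fin nn, ((j : ℕ) + 2) * mr j) *
        ∑ g ∈ (Fintype.piFinset fun _ : Fin (k + 1) => Finset.range (m1 + 1)).filter
            (fun g => ∑ i, g i = m1),
          ∑ Mm ∈ (Fintype.piFinset fun j : Fin nn => Fintype.piFinset fun _ : Fin k =>
                Finset.range (mr j + 1)).filter (fun Mm => ∀ j, ∑ i, Mm j i = mr j),
            (-(1 : ℂ) / 2) ^ (g 0) * (Nat.multinomial Finset.univ g : ℂ) *
              (∏ j, (Nat.multinomial Finset.univ (Mm j) : ℂ)) *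
              (∏ i : Fin k, (1 : ℂ) /
                (((2 * k + (g i.succ + ∑ j : Fin nn, ((j : ℕ) + 2) * Mm j i)
                    - ((i : ℕ) + 1)).factorial : ℂ))) *
              ∏ p ∈ Finset.univ.filter (fun p : Fin k × Fin k => p.1 < p.2),
                ((((g p.2.succ + ∑ j : Fin nn, ((j : ℕ) + 2) * Mm j p.2 : ℕ) : ℤ)
                    - ((g p.1.succ + ∑ j : Fin nn, ((j : ℕ) + 2) * Mm j p.1 : ℕ) : ℤ)
                    - ((p.2 : ℕ) : ℤ) + ((p.1 : ℕ) : ℤ) : ℤ) : ℂ) := by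
  have hne : ((2 * (Real.pi : ℂ) * Complex.I) ^ k * (k.factorial : ℂ)) ≠ 0 :=
    mul_ne_zero (pow_ne_zero _ Complex.two_pi_I_ne_zero)
      (Nat.cast_ne_zero.mpr (Nat.factorial_ne_zero k))
  have h := mc_sym k N (((Fintype.piFinset fun _ : Fin (k + 1) => Finset.range (m1 + 1)).filter
            (fun g => ∑ i, g i = m1)) ×ˢ
      ((Fintype.piFinset fun j : Fin nn => Fintype.piFinset fun _ : Fin k =>
                Finset.range (mr j + 1)).filter (fun Mm => ∀ j, ∑ i, Mm j i = mr j)))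
      (fun t => (-N / 2) ^ (t.1 0) * (Nat.multinomial Finset.univ t.1 : ℂ) *
              (∏ j, (Nat.multinomial Finset.univ (t.2 j) : ℂ)))
      (fun t i => t.1 i.succ + ∑ j : Fin nn, ((j : ℕ) + 2) * t.2 j i)
      (fun w => ((∑ l, 1 / w l) - N / 2) ^ m1 *
            ∏ j : Fin nn, (∑ l, 1 / w l ^ ((j : ℕ) + 2)) ^ (mr j)) ?_ ?_
  · have h' : ∀ A B : ℂ, A = ((2 * (Real.pi : ℂ) * Complex.I) ^ k * (k.factorial : ℂ)) * B →
        ((2 * (Real.pi : ℂ) * Complex.I) ^ k * (k.factorial : ℂ))⁻¹ * A = B := by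
      rintro A B rfl
      rw [inv_mul_cancel_left₀ hne]
    apply h'
    simp only [mul_assoc (_ / _ * _ ^ 2 : ℂ)]
    rw [h]
    congr 1
    rw [Finset.sum_product, Finset.mul_sum]
    refine Finset.sum_congr rfl fun g hg => ?_
    rw [Finset.mul_sum]
    refine Finset.sum_congr rfl fun M hM => ?_
    have hg' := (Finset.mem_filter.mp hg).2
    have hM' := (Finset.mem_filter.mp hM).2
    have hsum : g 0 + (k ^ 2 + ∑ i : Fin k, (g i.succ + ∑ j : Fin nn, ((j : ℕ) + 2) * M j i)) =
        k ^ 2 + m1 + ∑ j : Fin nn, ((j : ℕ) + 2) * mr j := by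
      rw [Finset.sum_add_distrib, Finset.sum_comm]
      simp only [← Finset.mul_sum, hM']
      rw [Fin.sum_univ_succ] at hg'
      omega
    rw [← hsum, pow_add N (g 0), show -N / 2 = N * (-1 / 2) by ring, mul_pow]
    have hp : (∏ p ∈ Finset.univ.filter (fun p : Fin k × Fin k => p.1 < p.2),
          (((2 * k + (g p.2.succ + ∑ j : Fin nn, ((j : ℕ) + 2) * M j p.2)
              - ((p.2 : ℕ) + 1) : ℕ) : ℂ) -
            ((2 * k + (g p.1.succ + ∑ j : Fin nn, ((j : ℕ) + 2) * M j p.1)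
              - ((p.1 : ℕ) + 1) : ℕ) : ℂ))) =
        ∏ p ∈ Finset.univ.filter (fun p : Fin k × Fin k => p.1 < p.2),
                ((((g p.2.succ + ∑ j : Fin nn, ((j : ℕ) + 2) * M j p.2 : ℕ) : ℤ)
                    - ((g p.1.succ + ∑ j : Fin nn, ((j : ℕ) + 2) * M j p.1 : ℕ) : ℤ)
                    - ((p.2 : ℕ) : ℤ) + ((p.1 : ℕ) : ℤ) : ℤ) : ℂ) := by
      refine Finset.prod_congr rfl fun p _ => ?_
      generalize g p.2.succ + ∑ j : Fin nn, ((j : ℕ) + 2) * M j p.2 = A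
      generalize g p.1.succ + ∑ j : Fin nn, ((j : ℕ) + 2) * M j p.1 = B
      have h1 := p.1.2
      have h2 := p.2.2
      rw [Nat.cast_sub (by omega), Nat.cast_sub (by omega)]
      push_cast
      ring
    simp only [hp]
    ring
  · intro w σ
    have h1 := Equiv.sum_comp σ (fun i => 1 / w i)
    have h2 : ∀ j : ℕ, ∑ i, 1 / w (σ i) ^ j = ∑ i, 1 / w i ^ j :=
      fun j => Equiv.sum_comp σ (fun i => 1 / w i ^ j)
    simp only [Function.comp, h1, h2]
  · exact fun w hw => P_expand k nn m1 mr N w hw
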